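/- Let (H,η) be an extended strip decomposition of a graph G. Suppose P1, P2, P3 are three induced paths in G that are pairwise vertex-disjoint and pairwise non-adjacent, and each of P1, P2, P3 has an endpoint that is peripheral in (H,η). Then for every vertex u of H, at most one of the paths P1, P2, P3 intersects the set η(u) ∪ ⋃_{w : uw ∈ E(H)} η(uw, u). -/

import Mathlib

noncomputable section

namespace Paper

/-- The closed neighborhood `N[X]` of a set `X` of vertices. -/
def closedNbhd {V : Type} (G : SimpleGraph V) (X : Set V) : Set V :=
  {v | v ∈ X ∨ ∃ x ∈ X, G.Adj x v}

/-- The total weight `w(X)` of a set of vertices. -/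
def wsum {V : Type} (w : V → ℕ) (X : Set V) : ℕ := ∑ᶠ x ∈ X, w x

/-- `p : Fin m → V` is an induced path in `G` (on `m` vertices). -/
def InducedPathFun {V : Type} (G : SimpleGraph V) {m : ℕ} (p : Fin m → V) : Prop :=
  Function.Injective p ∧
    ∀ i j : Fin m, G.Adj (p i) (p j) ↔ ((i : ℕ) + 1 = (j : ℕ) ∨ (j : ℕ) + 1 = (i : ℕ))

/-- The vertex sets `A` and `B` are non-adjacent in `G`. -/
def NonAdj {V : Type} (G : SimpleGraph V) (A B : Set V) : Prop :=
  ∀ x ∈ A, ∀ y ∈ B, ¬ G.Adj x y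

/-- `A` intersects or is adjacent to `B` in `G`. -/
def Touches {V : Type} (G : SimpleGraph V) (A B : Set V) : Prop :=
  ∃ x ∈ A, ∃ y ∈ B, x = y ∨ G.Adj x y

/-- `T` is (the vertex set of) a triangle in `H`. -/
def IsTriangle {W : Type} (H : SimpleGraph W) (T : Set W) : Prop :=
  ∃ u v x, H.Adj u v ∧ H.Adj u x ∧ H.Adj v x ∧ T = {u, v, x}

/-- An extended strip decomposition of the graph `G`, with pattern graph `H`.
`vmap u` is `η(u)` for a vertex `u` of `H`, `emap e` is `η(e)` for an edge `e` of `H`,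
`endmap u v` is `η(uv, u)` for an edge `uv` of `H` (with distinguished endpoint `u`),
and `tmap T` is `η(T)` for a triangle `T` of `H`.  (The values of `emap`, `endmap`, `tmap`
on non-edges/non-triangles are irrelevant.) -/
structure ESD {V W : Type} (G : SimpleGraph V) (H : SimpleGraph W) where
  vmap : W → Set V
  emap : Sym2 W → Set V
  endmap : W → W → Set V
  tmap : Set W → Set V
  endmap_subset : ∀ u v, H.Adj u v → endmap u v ⊆ emap s(u, v)
  cover : ∀ x : V, (∃ u, x ∈ vmap u) ∨ (∃ e ∈ H.edgeSet, x ∈ emap e) ∨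
    (∃ T, IsTriangle H T ∧ x ∈ tmap T)
  disj_vv : ∀ u u', u ≠ u' → Disjoint (vmap u) (vmap u')
  disj_ee : ∀ e e', e ∈ H.edgeSet → e' ∈ H.edgeSet → e ≠ e' → Disjoint (emap e) (emap e')
  disj_tt : ∀ T T', IsTriangle H T → IsTriangle H T' → T ≠ T' → Disjoint (tmap T) (tmap T')
  disj_ve : ∀ u e, e ∈ H.edgeSet → Disjoint (vmap u) (emap e)
  disj_vt : ∀ u T, IsTriangle H T → Disjoint (vmap u) (tmap T)
  disj_et : ∀ e T, e ∈ H.edgeSet → IsTriangle H T → Disjoint (emap e) (tmap T)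
  fully_adj : ∀ v u u', H.Adj v u → H.Adj v u' → u ≠ u' →
    ∀ x ∈ endmap v u, ∀ y ∈ endmap v u', G.Adj x y
  edge_cond : ∀ x y, G.Adj x y →
    (∃ u, x ∈ vmap u ∧ y ∈ vmap u) ∨
    (∃ e ∈ H.edgeSet, x ∈ emap e ∧ y ∈ emap e) ∨
    (∃ T, IsTriangle H T ∧ x ∈ tmap T ∧ y ∈ tmap T) ∨
    (∃ v u u', H.Adj v u ∧ H.Adj v u' ∧ u ≠ u' ∧ x ∈ endmap v u ∧ y ∈ endmap v u') ∨
    (∃ v u, H.Adj v u ∧ ((x ∈ vmap v ∧ y ∈ endmap v u) ∨ (y ∈ vmap v ∧ x ∈ endmap v u))) ∨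
    (∃ T u u', IsTriangle H T ∧ u ∈ T ∧ u' ∈ T ∧ H.Adj u u' ∧
      ((x ∈ tmap T ∧ y ∈ endmap u u' ∩ endmap u' u) ∨
       (y ∈ tmap T ∧ x ∈ endmap u u' ∩ endmap u' u)))

/-- Names (labels) for the atoms of an extended strip decomposition with pattern graph on `W`:
`bot e = A_e^⊥`, `half u v = A_{uv}^u`, `full e = A_e^{uv}` for an edge `e = uv`,
`vert u = A_u` for a vertex `u`, and `tri T = A_T` for a triangle `T`. -/
inductive AtomLabel (W : Type) where
  | bot : Sym2 W → AtomLabel W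
  | half : W → W → AtomLabel W
  | full : Sym2 W → AtomLabel W
  | vert : W → AtomLabel W
  | tri : Set W → AtomLabel W

/-- An atom label is valid if the underlying feature is really an edge / a triangle of `H`. -/
def ValidAtom {W : Type} (H : SimpleGraph W) : AtomLabel W → Prop
  | .bot e => e ∈ H.edgeSet
  | .half u v => H.Adj u v
  | .full e => e ∈ H.edgeSet
  | .vert _ => True
  | .tri T => IsTriangle H T

/-- The vertex set of `G` corresponding to an atom label. -/
def ESD.atomSet {V W : Type} {G : SimpleGraph V} {H : SimpleGraph W} (D : ESD G H) :
    AtomLabel W → Set V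
  | .bot e => D.emap e \
      Sym2.lift ⟨fun u v => D.endmap u v ∪ D.endmap v u, fun _ _ => Set.union_comm _ _⟩ e
  | .half u v => D.vmap u ∪ (D.emap s(u, v) \ D.endmap v u)
  | .full e =>
      Sym2.lift ⟨fun u v => D.vmap u ∪ D.vmap v, fun _ _ => Set.union_comm _ _⟩ e ∪
        D.emap e ∪ ⋃ T ∈ {T : Set W | IsTriangle H T ∧ ∀ x ∈ e, x ∈ T}, D.tmap T
  | .vert u => D.vmap u
  | .tri T => D.tmap T

/-- The four atoms associated with the edge `uv` of `H`. -/
def Quad {W : Type} (u v : W) : Set (AtomLabel W) :=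
  {AtomLabel.bot s(u, v), AtomLabel.half u v, AtomLabel.half v u, AtomLabel.full s(u, v)}

/-- Two atom labels are conflicting. -/
def Conflict {W : Type} (H : SimpleGraph W) (a b : AtomLabel W) : Prop :=
  (∃ u v, H.Adj u v ∧ a ≠ b ∧ a ∈ Quad u v ∧ b ∈ Quad u v) ∨
  (∃ u v, H.Adj u v ∧
    (((a = AtomLabel.half u v ∨ a = AtomLabel.full s(u, v)) ∧ b = AtomLabel.vert u) ∨
     ((b = AtomLabel.half u v ∨ b = AtomLabel.full s(u, v)) ∧ a = AtomLabel.vert u))) ∨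
  (∃ u v v', H.Adj u v ∧ H.Adj u v' ∧ v ≠ v' ∧
    (a = AtomLabel.half u v ∨ a = AtomLabel.full s(u, v)) ∧
    (b = AtomLabel.half u v' ∨ b = AtomLabel.full s(u, v'))) ∨
  (∃ u v T, H.Adj u v ∧ IsTriangle H T ∧ u ∈ T ∧ v ∈ T ∧
    ((a = AtomLabel.full s(u, v) ∧ b = AtomLabel.tri T) ∨
     (b = AtomLabel.full s(u, v) ∧ a = AtomLabel.tri T)))

/-- A family of atoms is independent if its members are pairwise non-conflicting. -/
def IndepFamily {W : Type} (H : SimpleGraph W) (𝒜 : Set (AtomLabel W)) : Prop :=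
  ∀ a ∈ 𝒜, ∀ b ∈ 𝒜, ¬ Conflict H a b

/-- The vertex `z` of `G` is peripheral in the extended strip decomposition `D`. -/
def Peripheral {V W : Type} {G : SimpleGraph V} {H : SimpleGraph W} (D : ESD G H)
    (z : V) : Prop :=
  ∃ wz u, H.Adj wz u ∧ (∀ u', H.Adj wz u' → u' = u) ∧ D.endmap wz u = {z}
/-- The set `K_u = η(u) ∪ ⋃_{w : uw ∈ E(H)} η(uw, u)` for a vertex `u` of `H`. -/
def Kset {V W : Type} {G : SimpleGraph V} (H : SimpleGraph W) (D : ESD G H) (u : W) :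
    Set V :=
  D.vmap u ∪ ⋃ v ∈ {v : W | H.Adj u v}, D.endmap u v

/-- Connectivity of a vertex set, phrased via crossing edges. -/
def Cross {V : Type} (G : SimpleGraph V) (S : Set V) : Prop :=
  ∀ X : Set V, (∃ a ∈ S, a ∈ X) → (∃ b ∈ S, b ∉ X) → ∃ x ∈ S, x ∈ X ∧ ∃ y ∈ S, y ∉ X ∧ G.Adj x y

lemma cross_path {V : Type} {G : SimpleGraph V} {m : ℕ} {p : Fin m → V}
    (h : InducedPathFun G p) : Cross G (Set.range p) := by
  rintro X ⟨_, ⟨i, rfl⟩, hi⟩ ⟨_, ⟨j, rfl⟩, hj⟩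
  by_contra hc
  have hstep : ∀ a b : Fin m, ((a : ℕ) + 1 = b ∨ (b : ℕ) + 1 = a) → p a ∈ X → p b ∈ X := by
    intro a b hab ha
    by_contra hb
    exact hc ⟨p a, ⟨a, rfl⟩, ha, p b, ⟨b, rfl⟩, hb, (h.2 a b).2 hab⟩
  have up : ∀ n : ℕ, ∀ hn : (i : ℕ) + n < m, p ⟨i + n, hn⟩ ∈ X := by
    intro n
    induction n with
    | zero => intro _; exact hi
    | succ k ih =>
      intro hn
      exact hstep ⟨i + k, by omega⟩ _ (Or.inl (by simp; omega)) (ih (by omega))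
  have down : ∀ n : ℕ, ∀ hn : (i : ℕ) - n < m, p ⟨i - n, hn⟩ ∈ X := by
    intro n
    induction n with
    | zero => intro _; exact hi
    | succ k ih =>
      intro hn
      by_cases hk : (i : ℕ) ≤ k
      · have := ih (by omega)
        have e : (i : ℕ) - (k + 1) = i - k := by omega
        simpa only [e] using this
      · exact hstep ⟨i - k, by omega⟩ _ (Or.inr (by simp; omega)) (ih (by omega))
  apply hj
  rcases le_total (i : ℕ) j with hij | hij
  · have := up (j - i) (by omega)
    have e : (⟨i + (j - i), by omega⟩ : Fin m) = j := by ext; simp; omega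
    rwa [e] at this
  · have := down (i - j) (by omega)
    have e : (⟨i - (i - j), by omega⟩ : Fin m) = j := by ext; simp; omega
    rwa [e] at this

section
variable {V W : Type} {G : SimpleGraph V} {H : SimpleGraph W} (D : ESD G H)

lemma v_uniq {x : V} {u u' : W} (h : x ∈ D.vmap u) (h' : x ∈ D.vmap u') : u = u' := by
  by_contra hn
  exact Set.disjoint_left.1 (D.disj_vv _ _ hn) h h'

lemma e_uniq {x : V} {e e' : Sym2 W} (he : e ∈ H.edgeSet) (he' : e' ∈ H.edgeSet)
    (h : x ∈ D.emap e) (h' : x ∈ D.emap e') : e = e' := by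
  by_contra hn
  exact Set.disjoint_left.1 (D.disj_ee _ _ he he' hn) h h'

lemma t_uniq {x : V} {T T' : Set W} (he : IsTriangle H T) (he' : IsTriangle H T')
    (h : x ∈ D.tmap T) (h' : x ∈ D.tmap T') : T = T' := by
  by_contra hn
  exact Set.disjoint_left.1 (D.disj_tt _ _ he he' hn) h h'

lemma ve {x : V} {u : W} {e : Sym2 W} (he : e ∈ H.edgeSet)
    (h : x ∈ D.vmap u) (h' : x ∈ D.emap e) : False :=
  Set.disjoint_left.1 (D.disj_ve _ _ he) h h'

lemma vt {x : V} {u : W} {T : Set W} (he : IsTriangle H T)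
    (h : x ∈ D.vmap u) (h' : x ∈ D.tmap T) : False :=
  Set.disjoint_left.1 (D.disj_vt _ _ he) h h'

lemma et {x : V} {e : Sym2 W} {T : Set W} (he : e ∈ H.edgeSet) (hT : IsTriangle H T)
    (h : x ∈ D.emap e) (h' : x ∈ D.tmap T) : False :=
  Set.disjoint_left.1 (D.disj_et _ _ he hT) h h'

lemma endE {x : V} {a b : W} (h : H.Adj a b) (hx : x ∈ D.endmap a b) :
    x ∈ D.emap s(a, b) := D.endmap_subset _ _ h hx

lemma exit_v {x y : V} {u : W} (h : G.Adj x y) (hx : x ∈ D.vmap u) :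
    y ∈ D.vmap u ∨ ∃ w, H.Adj u w ∧ y ∈ D.endmap u w := by
  rcases D.edge_cond x y h with ⟨u', h1, h2⟩ | ⟨e, he, h1, h2⟩ | ⟨T, hT, h1, h2⟩ |
    ⟨v, a, b, ha, hb, hab, h1, h2⟩ | ⟨v, a, ha, ⟨h1, h2⟩ | ⟨h1, h2⟩⟩ |
    ⟨T, a, b, hT, ha, hb, hab, ⟨h1, h2⟩ | ⟨h1, h2⟩⟩
  · obtain rfl := v_uniq D hx h1
    exact Or.inl h2
  · exact (ve D he hx h1).elim
  · exact (vt D hT hx h1).elim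
  · exact (ve D ((SimpleGraph.mem_edgeSet H).2 ha) hx (endE D ha h1)).elim
  · obtain rfl := v_uniq D hx h1
    exact Or.inr ⟨a, ha, h2⟩
  · exact (ve D ((SimpleGraph.mem_edgeSet H).2 ha) hx (endE D ha h2)).elim
  · exact (vt D hT hx h1).elim
  · exact (ve D ((SimpleGraph.mem_edgeSet H).2 hab) hx (endE D hab h2.1)).elim

lemma exit_t {x y : V} {T : Set W} (hT : IsTriangle H T) (h : G.Adj x y) (hx : x ∈ D.tmap T) :
    y ∈ D.tmap T ∨ ∃ a b, a ∈ T ∧ b ∈ T ∧ H.Adj a b ∧ y ∈ D.endmap a b ∧ y ∈ D.endmap b a := by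
  rcases D.edge_cond x y h with ⟨u', h1, h2⟩ | ⟨e, he, h1, h2⟩ | ⟨T', hT', h1, h2⟩ |
    ⟨v, a, b, ha, hb, hab, h1, h2⟩ | ⟨v, a, ha, ⟨h1, h2⟩ | ⟨h1, h2⟩⟩ |
    ⟨T', a, b, hT', ha, hb, hab, ⟨h1, h2⟩ | ⟨h1, h2⟩⟩
  · exact (vt D hT h1 hx).elim
  · exact (et D he hT h1 hx).elim
  · obtain rfl := t_uniq D hT hT' hx h1
    exact Or.inl h2
  · exact (et D ((SimpleGraph.mem_edgeSet H).2 ha) hT (endE D ha h1) hx).elim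
  · exact (vt D hT h1 hx).elim
  · exact (et D ((SimpleGraph.mem_edgeSet H).2 ha) hT (endE D ha h2) hx).elim
  · obtain rfl := t_uniq D hT hT' hx h1
    exact Or.inr ⟨a, b, ha, hb, hab, h2.1, h2.2⟩
  · exact (et D ((SimpleGraph.mem_edgeSet H).2 hab) hT (endE D hab h2.1) hx).elim

/-- How an edge of `G` may leave `η(uw)`. -/
lemma exit_e {x y : V} {u w : W} (huw : H.Adj u w) (h : G.Adj x y) (hx : x ∈ D.emap s(u, w)) :
    y ∈ D.emap s(u, w) ∨
    (∃ b, H.Adj u b ∧ b ≠ w ∧ x ∈ D.endmap u w ∧ y ∈ D.endmap u b) ∨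
    (∃ b, H.Adj w b ∧ b ≠ u ∧ x ∈ D.endmap w u ∧ y ∈ D.endmap w b) ∨
    (x ∈ D.endmap u w ∧ y ∈ D.vmap u) ∨
    (x ∈ D.endmap w u ∧ y ∈ D.vmap w) ∨
    (x ∈ D.endmap u w ∧ x ∈ D.endmap w u ∧ ∃ T, IsTriangle H T ∧ u ∈ T ∧ w ∈ T ∧ y ∈ D.tmap T) := by
  have huw' : s(u, w) ∈ H.edgeSet := huw
  have key : ∀ {a b : W}, H.Adj a b → x ∈ D.endmap a b → (a = u ∧ b = w) ∨ (a = w ∧ b = u) := by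
    intro a b hab hx'
    have := e_uniq D (e := s(a, b)) hab huw' (endE D hab hx') hx
    simpa [Sym2.eq_iff] using this
  rcases D.edge_cond x y h with ⟨u', h1, h2⟩ | ⟨e, he, h1, h2⟩ | ⟨T', hT', h1, h2⟩ |
    ⟨v, a, b, ha, hb, hab, h1, h2⟩ | ⟨v, a, ha, ⟨h1, h2⟩ | ⟨h1, h2⟩⟩ |
    ⟨T', a, b, hT', ha, hb, hab, ⟨h1, h2⟩ | ⟨h1, h2⟩⟩
  · exact (ve D huw' h1 hx).elim
  · obtain rfl := e_uniq D he huw' h1 hx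
    exact Or.inl h2
  · exact (et D huw' hT' hx h1).elim
  · rcases key ha h1 with ⟨rfl, rfl⟩ | ⟨rfl, rfl⟩
    · exact Or.inr (Or.inl ⟨b, hb, hab.symm, h1, h2⟩)
    · exact Or.inr (Or.inr (Or.inl ⟨b, hb, hab.symm, h1, h2⟩))
  · exact (ve D huw' h1 hx).elim
  · rcases key ha h2 with ⟨rfl, rfl⟩ | ⟨rfl, rfl⟩ <;> tauto
  · exact (et D huw' hT' hx h1).elim
  · rcases key hab h2.1 with ⟨rfl, rfl⟩ | ⟨rfl, rfl⟩
    · exact Or.inr (Or.inr (Or.inr (Or.inr (Or.inr ⟨h2.1, h2.2, T', hT', ha, hb, h1⟩))))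
    · exact Or.inr (Or.inr (Or.inr (Or.inr (Or.inr ⟨h2.2, h2.1, T', hT', hb, ha, h1⟩))))

/-- `S` meets some `η(ub, u)` with `b ≠ w`. -/
def Meets (S : Set V) (u w : W) : Prop := ∃ b, H.Adj u b ∧ b ≠ w ∧ ∃ y ∈ S, y ∈ D.endmap u b

lemma lemA {S : Set V} (hS : Cross G S) {u w : W} (huw : H.Adj u w)
    (hx : ∃ x ∈ S, x ∈ D.endmap u w) {z : V} (hz : z ∈ S) {e : Sym2 W} (he : e ∈ H.edgeSet)
    (hze : z ∈ D.emap e) (hne : z ∉ D.emap s(u, w)) :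
    Meets D S u w ∨ ∃ x ∈ S, x ∈ D.endmap w u := by
  obtain ⟨x, hxS, hx⟩ := hx
  obtain ⟨x, hxS, hx | hx, y, hyS, hy, hadj⟩ := hS (D.emap s(u, w) ∪ D.vmap u)
    ⟨x, hxS, Or.inl (endE D huw hx)⟩
    ⟨z, hz, fun h => h.elim hne (fun h => ve D he h hze)⟩
  · rcases exit_e D huw hadj hx with h | ⟨b, h1, h2, h3, h4⟩ | ⟨b, h1, h2, h3, h4⟩ | ⟨h1, h2⟩ |
      ⟨h1, h2⟩ | ⟨h1, h2, h3⟩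
    · exact (hy (Or.inl h)).elim
    · exact Or.inl ⟨b, h1, h2, y, hyS, h4⟩
    · exact Or.inr ⟨x, hxS, h3⟩
    · exact (hy (Or.inr h2)).elim
    · exact Or.inr ⟨x, hxS, h1⟩
    · exact Or.inr ⟨x, hxS, h2⟩
  · rcases exit_v D hadj hx with h | ⟨b, hb, h⟩
    · exact (hy (Or.inr h)).elim
    · refine Or.inl ⟨b, hb, ?_, y, hyS, h⟩
      rintro rfl
      exact hy (Or.inl (endE D hb h))

lemma lemB {S : Set V} (hS : Cross G S) {u w : W} (huw : H.Adj u w)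
    (hx : ∃ x ∈ S, x ∈ D.endmap u w) {z : V} (hz : z ∈ S) {e : Sym2 W} (he : e ∈ H.edgeSet)
    (hze : z ∈ D.emap e) (hne : z ∉ D.emap s(u, w)) :
    Meets D S u w ∨ Meets D S w u := by
  obtain ⟨x, hxS, hx⟩ := hx
  obtain ⟨x, hxS, hx, y, hyS, hy, hadj⟩ := hS {x | x ∈ D.emap s(u, w) ∨ x ∈ D.vmap u ∨
      x ∈ D.vmap w ∨ ∃ T, IsTriangle H T ∧ u ∈ T ∧ w ∈ T ∧ x ∈ D.tmap T}
    ⟨x, hxS, Or.inl (endE D huw hx)⟩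
    ⟨z, hz, by
      rintro (h | h | h | ⟨T, hT, -, -, h⟩)
      · exact hne h
      · exact ve D he h hze
      · exact ve D he h hze
      · exact et D he hT hze h⟩
  simp only [Set.mem_setOf_eq, not_or] at hy
  obtain ⟨hy1, hy2, hy3, hy4⟩ := hy
  have nb : ∀ {a b : W}, H.Adj a b → y ∈ D.endmap a b → s(a, b) ≠ s(u, w) := by
    intro a b hab h heq
    have := endE D hab h
    rw [heq] at this
    exact hy1 this
  rcases hx with hx | hx | hx | ⟨T, hT, huT, hwT, hx⟩
  · rcases exit_e D huw hadj hx with h | ⟨b, h1, h2, h3, h4⟩ | ⟨b, h1, h2, h3, h4⟩ | ⟨h1, h2⟩ |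
      ⟨h1, h2⟩ | ⟨h1, h2, h3⟩
    · exact (hy1 h).elim
    · exact Or.inl ⟨b, h1, h2, y, hyS, h4⟩
    · exact Or.inr ⟨b, h1, h2, y, hyS, h4⟩
    · exact (hy2 h2).elim
    · exact (hy3 h2).elim
    · exact (hy4 h3).elim
  · rcases exit_v D hadj hx with h | ⟨b, hb, h⟩
    · exact (hy2 h).elim
    · exact Or.inl ⟨b, hb, fun hbw => nb hb h (by rw [hbw]), y, hyS, h⟩
  · rcases exit_v D hadj hx with h | ⟨b, hb, h⟩
    · exact (hy3 h).elim
    · exact Or.inr ⟨b, hb, fun hbw => nb hb h (by rw [hbw, Sym2.eq_swap]), y, hyS, h⟩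
  · rcases exit_t D hT hadj hx with h | ⟨a, b, haT, hbT, hab, h1, h2⟩
    · exact (hy4 ⟨T, hT, huT, hwT, h⟩).elim
    · have n1 := nb hab h1
      have hmem : a = u ∨ a = w ∨ b = u ∨ b = w := by
        obtain ⟨t1, t2, t3, -, -, -, rfl⟩ := hT
        have h3 := hab.ne
        have h4 := huw.ne
        simp only [Set.mem_insert_iff, Set.mem_singleton_iff] at huT hwT haT hbT
        grind
      rcases hmem with rfl | rfl | rfl | rfl
      · exact Or.inl ⟨b, hab, fun hbw => n1 (by rw [hbw]), y, hyS, h1⟩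
      · exact Or.inr ⟨b, hab, fun hbw => n1 (by rw [hbw, Sym2.eq_swap]), y, hyS, h1⟩
      · exact Or.inl ⟨a, hab.symm, fun hbw => n1 (by rw [hbw, Sym2.eq_swap]), y, hyS, h2⟩
      · exact Or.inr ⟨a, hab.symm, fun hbw => n1 (by rw [hbw]), y, hyS, h2⟩

lemma kset_end {S : Set V} (hS : Cross G S) {u : W} (hK : (S ∩ Kset H D u).Nonempty)
    {z : V} (hz : z ∈ S) {e : Sym2 W} (he : e ∈ H.edgeSet) (hze : z ∈ D.emap e) :
    ∃ w, H.Adj u w ∧ ∃ x ∈ S, x ∈ D.endmap u w := by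
  obtain ⟨x, hxS, hx | hx⟩ := hK
  · obtain ⟨x, hxS, hx, y, hyS, hy, hadj⟩ := hS (D.vmap u) ⟨x, hxS, hx⟩
      ⟨z, hz, fun h => ve D he h hze⟩
    rcases exit_v D hadj hx with h | ⟨b, hb, h⟩
    · exact (hy h).elim
    · exact ⟨b, hb, y, hyS, h⟩
  · simp only [Set.mem_setOf_eq, Set.mem_iUnion] at hx
    obtain ⟨w, hw, hx⟩ := hx
    exact ⟨w, hw, x, hxS, hx⟩

lemma meets_false {S S' : Set V} (hA : NonAdj G S S') {u w : W} (huw : H.Adj u w)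
    (hM : Meets D S u w) (hx : ∃ x ∈ S', x ∈ D.endmap u w) : False := by
  obtain ⟨b, hb, hbw, y, hy, hyb⟩ := hM
  obtain ⟨x, hx, hxw⟩ := hx
  exact hA y hy x hx (D.fully_adj u b w hb huw hbw y hyb x hxw)

/-- The case where the peripheral vertex of `S` lies in `η(uw)`. -/
lemma inside_false {S S' : Set V} (hS' : Cross G S') (hd : Disjoint S S')
    (hA' : NonAdj G S' S) {u w : W} (huw : H.Adj u w)
    (hx : ∃ x ∈ S, x ∈ D.endmap u w) (hx' : ∃ x ∈ S', x ∈ D.endmap u w)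
    {z z' : V} (hz : z ∈ S) (hz' : z' ∈ S') (hp : Peripheral D z) (hp' : Peripheral D z')
    (hin : z ∈ D.emap s(u, w)) : False := by
  have huw' : s(u, w) ∈ H.edgeSet := huw
  have core : ∀ {R R' : Set V}, Disjoint R R' → (∃ x ∈ R', x ∈ D.endmap u w) →
      ∀ {q : V}, q ∈ R → Peripheral D q → q ∈ D.emap s(u, w) →
      (∀ b, H.Adj w b → b = u) ∧ D.endmap w u = {q} := by
    intro R R' hdR hxR q hq hpq hqe
    obtain ⟨a, b, hab, hdeg, hend⟩ := hpq
    have hqa : q ∈ D.endmap a b := by rw [hend]; rfl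
    have := e_uniq D (e := s(a, b)) hab huw' (endE D hab hqa) hqe
    rcases Sym2.eq_iff.1 this with ⟨rfl, rfl⟩ | ⟨rfl, rfl⟩
    · obtain ⟨x, hxR, hxe⟩ := hxR
      rw [hend] at hxe
      obtain rfl : x = q := hxe
      exact (Set.disjoint_left.1 hdR hq hxR).elim
    · exact ⟨hdeg, hend⟩
  obtain ⟨hdeg, hend⟩ := core hd hx' hz hp hin
  by_cases hin' : z' ∈ D.emap s(u, w)
  · obtain ⟨-, hend'⟩ := core hd.symm hx hz' hp' hin'
    have : z = z' := by
      have : z ∈ D.endmap w u := by rw [hend]; rfl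
      rw [hend'] at this
      exact this
    subst this
    exact Set.disjoint_left.1 hd hz hz'
  · obtain ⟨a, b, hab, -, hend'⟩ := hp'
    have hqa : z' ∈ D.endmap a b := by rw [hend']; rfl
    rcases lemB D hS' huw hx' hz' (e := s(a, b)) hab (endE D hab hqa) hin' with h | h
    · exact meets_false D hA' huw h hx
    · obtain ⟨b, hb, hne, -⟩ := h
      exact hne (hdeg b hb)

lemma pairwise_false {S S' : Set V} (hS : Cross G S) (hS' : Cross G S') (hd : Disjoint S S')
    (hA : NonAdj G S S') (hp : ∃ z ∈ S, Peripheral D z) (hp' : ∃ z ∈ S', Peripheral D z) (u : W) :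
    ¬ ((S ∩ Kset H D u).Nonempty ∧ (S' ∩ Kset H D u).Nonempty) := by
  rintro ⟨hK, hK'⟩
  have hA' : NonAdj G S' S := fun x hx y hy h => hA y hy x hx h.symm
  obtain ⟨z, hz, hp⟩ := hp
  obtain ⟨z', hz', hp'⟩ := hp'
  have pe : ∀ {q : V}, Peripheral D q → ∃ e ∈ H.edgeSet, q ∈ D.emap e := by
    rintro q ⟨a, b, hab, -, hend⟩
    exact ⟨s(a, b), hab, endE D hab (by rw [hend]; rfl)⟩
  obtain ⟨e, he, hze⟩ := pe hp
  obtain ⟨e', he', hze'⟩ := pe hp'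
  obtain ⟨w, huw, hx⟩ := kset_end D hS hK hz he hze
  obtain ⟨w', huw', hx'⟩ := kset_end D hS' hK' hz' he' hze'
  obtain rfl : w = w' := by
    by_contra hne
    obtain ⟨x, hx, hxe⟩ := hx
    obtain ⟨x', hx', hxe'⟩ := hx'
    exact hA x hx x' hx' (D.fully_adj u w w' huw huw' hne x hxe x' hxe')
  by_cases hin : z ∈ D.emap s(u, w)
  · exact inside_false D hS' hd hA' huw hx hx' hz hz' hp hp' hin
  by_cases hin' : z' ∈ D.emap s(u, w)
  · exact inside_false D hS hd.symm hA huw hx' hx hz' hz hp' hp hin'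
  have n1 : ¬ Meets D S u w := fun h => meets_false D hA huw h hx'
  have n2 : ¬ Meets D S' u w := fun h => meets_false D hA' huw h hx
  have a1 := (lemB D hS huw hx hz he hze hin).resolve_left n1
  have a2 := (lemA D hS' huw hx' hz' he' hze' hin').resolve_left n2
  exact meets_false D hA huw.symm a1 a2

end

/-- if `P₁, P₂, P₃` are pairwise vertex-disjoint, pairwise non-adjacent
induced paths in `G`, each having a peripheral endpoint in the extended strip
decomposition `(H, η)` of `G`, then for every vertex `u` of `H` at most one of the three
paths intersects the set `η(u) ∪ ⋃_{w : uw ∈ E(H)} η(uw, u)`. -/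
theorem stmt14 {V W : Type} (G : SimpleGraph V) (H : SimpleGraph W) (D : ESD G H)
    (m₁ m₂ m₃ : ℕ) (p₁ : Fin (m₁ + 1) → V) (p₂ : Fin (m₂ + 1) → V) (p₃ : Fin (m₃ + 1) → V)
    (h₁ : InducedPathFun G p₁) (h₂ : InducedPathFun G p₂) (h₃ : InducedPathFun G p₃)
    (hd₁₂ : Disjoint (Set.range p₁) (Set.range p₂))
    (hd₁₃ : Disjoint (Set.range p₁) (Set.range p₃))
    (hd₂₃ : Disjoint (Set.range p₂) (Set.range p₃))
    (ha₁₂ : NonAdj G (Set.range p₁) (Set.range p₂))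
    (ha₁₃ : NonAdj G (Set.range p₁) (Set.range p₃))
    (ha₂₃ : NonAdj G (Set.range p₂) (Set.range p₃))
    (hp₁ : Peripheral D (p₁ 0) ∨ Peripheral D (p₁ (Fin.last m₁)))
    (hp₂ : Peripheral D (p₂ 0) ∨ Peripheral D (p₂ (Fin.last m₂)))
    (hp₃ : Peripheral D (p₃ 0) ∨ Peripheral D (p₃ (Fin.last m₃))) :
    ∀ u : W,
      ¬ ((Set.range p₁ ∩ Kset H D u).Nonempty ∧ (Set.range p₂ ∩ Kset H D u).Nonempty) ∧
      ¬ ((Set.range p₁ ∩ Kset H D u).Nonempty ∧ (Set.range p₃ ∩ Kset H D u).Nonempty) ∧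
      ¬ ((Set.range p₂ ∩ Kset H D u).Nonempty ∧ (Set.range p₃ ∩ Kset H D u).Nonempty) := by
  have per : ∀ {m : ℕ} {p : Fin (m + 1) → V},
      (Peripheral D (p 0) ∨ Peripheral D (p (Fin.last m))) → ∃ z ∈ Set.range p, Peripheral D z := by
    rintro m p (h | h)
    · exact ⟨_, ⟨_, rfl⟩, h⟩
    · exact ⟨_, ⟨_, rfl⟩, h⟩
  intro u
  exact ⟨pairwise_false D (cross_path h₁) (cross_path h₂) hd₁₂ ha₁₂ (per hp₁) (per hp₂) u,
    pairwise_false D (cross_path h₁) (cross_path h₃) hd₁₃ ha₁₃ (per hp₁) (per hp₃) u,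
    pairwise_false D (cross_path h₂) (cross_path h₃) hd₂₃ ha₂₃ (per hp₂) (per hp₃) u⟩

end Paper
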